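/- Single-letterization of the distortion constraint: under the converse setup, let Dec : 𝒴^n × 𝒲 × 𝒦 → 𝒳̂^n be any decoder and let d : 𝒳̃ × 𝒳̂ → [0, d_max] be a bounded per-letter distortion function. Then for each i ∈ {1,…,n}: (a) X̃_i is conditionally independent of Y^{i−1} given (W, K, X^{i−1}, Z^{i−1}, Y_i^n); and (b) there exists a function φ_i of (U_i, Y_i) — where U_i = (W, Y_{i+1}^n, Z^{i−1}, X^{i−1}, K) — such that E[ d(X̃_i, φ_i(U_i, Y_i)) ] ≤ E[ d(X̃_i, Dec(Y^n, W, K)_i) ]. Hence E[(1/n) Σ_{i=1}^n d(X̃_i, Dec(Y^n, W, K)_i)] ≥ (1/n) Σ_{i=1}^n E[ d(X̃_i, φ_i(U_i, Y_i)) ]. -/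

import Mathlib

open MeasureTheory

noncomputable section

/-- Probability mass `P[X = x]` of a finitely-valued random variable `X` on `(Ω, μ)`. -/
def pmass {Ω : Type*} [MeasurableSpace Ω] (μ : Measure Ω) {α : Type*}
    (X : Ω → α) (x : α) : ℝ :=
  (μ (X ⁻¹' {x})).toReal

/-- Shannon entropy `H(X)` (in nats) of a finitely-valued random variable. -/
def entropyRV {Ω : Type*} [MeasurableSpace Ω] (μ : Measure Ω) {α : Type*} [Fintype α]
    (X : Ω → α) : ℝ :=
  ∑ x : α, Real.negMulLog (pmass μ X x)

/-- Conditional Shannon entropy `H(X | Y)`. -/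
def condEntropyRV {Ω : Type*} [MeasurableSpace Ω] (μ : Measure Ω) {α β : Type*}
    [Fintype α] [Fintype β] (X : Ω → α) (Y : Ω → β) : ℝ :=
  entropyRV μ (fun ω => (X ω, Y ω)) - entropyRV μ Y

/-- Mutual information `I(X;Y)`. -/
def mutualInfoRV {Ω : Type*} [MeasurableSpace Ω] (μ : Measure Ω) {α β : Type*}
    [Fintype α] [Fintype β] (X : Ω → α) (Y : Ω → β) : ℝ :=
  entropyRV μ X + entropyRV μ Y - entropyRV μ (fun ω => (X ω, Y ω))

/-- Conditional mutual information `I(X;Y|Z)`. -/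
def condMutualInfoRV {Ω : Type*} [MeasurableSpace Ω] (μ : Measure Ω) {α β γ : Type*}
    [Fintype α] [Fintype β] [Fintype γ] (X : Ω → α) (Y : Ω → β) (Z : Ω → γ) : ℝ :=
  entropyRV μ (fun ω => (X ω, Z ω)) + entropyRV μ (fun ω => (Y ω, Z ω))
    - entropyRV μ Z - entropyRV μ (fun ω => (X ω, Y ω, Z ω))

/-- Expected value `E[f(X)]` of a function of a finitely-valued random variable. -/
def expVal {Ω : Type*} [MeasurableSpace Ω] (μ : Measure Ω) {α : Type*} [Fintype α]
    (X : Ω → α) (f : α → ℝ) : ℝ :=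
  ∑ a : α, pmass μ X a * f a

/-- Independence of two finitely-valued random variables, via their joint mass. -/
def IndepRV {Ω : Type*} [MeasurableSpace Ω] (μ : Measure Ω) {α β : Type*}
    (X : Ω → α) (Y : Ω → β) : Prop :=
  ∀ a b, pmass μ (fun ω => (X ω, Y ω)) (a, b) = pmass μ X a * pmass μ Y b

/-- Conditional independence of `A` and `C` given `B` (the Markov chain `A − B − C`)
for finitely-valued random variables, via joint masses. -/
def CondIndepRV {Ω : Type*} [MeasurableSpace Ω] (μ : Measure Ω) {α β γ : Type*}
    (A : Ω → α) (B : Ω → β) (C : Ω → γ) : Prop :=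
  ∀ a b c,
    pmass μ (fun ω => (A ω, B ω, C ω)) (a, b, c) * pmass μ B b
      = pmass μ (fun ω => (A ω, B ω)) (a, b) * pmass μ (fun ω => (B ω, C ω)) (b, c)

/-- `X` is uniformly distributed on its (finite) alphabet. -/
def UniformRV {Ω : Type*} [MeasurableSpace Ω] (μ : Measure Ω) {α : Type*} [Fintype α]
    (X : Ω → α) : Prop :=
  ∀ x, pmass μ X x = 1 / (Fintype.card α : ℝ)

/-- The sequence `S = (S_1, …, S_n)` is i.i.d. with single-letter pmf `p`. -/
def HasIIDLaw {Ω : Type*} [MeasurableSpace Ω] (μ : Measure Ω) {α : Type*} {n : ℕ}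
    (S : Ω → Fin n → α) (p : α → ℝ) : Prop :=
  ∀ v : Fin n → α, pmass μ S v = ∏ i, p (v i)

/-- `[a]⁻ = min {a, 0}`. -/
def negPartR (a : ℝ) : ℝ := min a 0

/-!
Split the letters at `i` into the past `j < i` and the rest. Because the channel is memoryless, the
joint law of all the data is a weight not involving `Y^{i-1}` times `∏_{j < i} P(Yⱼ, Zⱼ | Xⱼ)`, and
the second factor depends only on `(X^{i-1}, Z^{i-1})` and `Y^{i-1}`. This product form is
the Markov chain `X̃ᵢ − (W, K, X^{i-1}, Z^{i-1}, Yᵢⁿ) − Y^{i-1}`.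

Given this chain, the conditional expected distortion of the decoder is an average over the values
of `Y^{i-1}`, with weights that do not depend on `X̃ᵢ`. Feeding the decoder, in place of `Y^{i-1}`,
the best value for the observed `(W, K, X^{i-1}, Z^{i-1}, Yᵢⁿ)` therefore does at least as well.
-/

section FiniteRandomVariables

variable {Ω : Type*} [MeasurableSpace Ω] {μ : Measure Ω} {α β τ : Type*}

theorem pmass_nonneg (X : Ω → α) (x : α) : 0 ≤ pmass μ X x :=
  ENNReal.toReal_nonneg

theorem pmass_congr {X : Ω → α} {Y : Ω → β} {x : α} {y : β} (h : ∀ ω, X ω = x ↔ Y ω = y) :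
    pmass μ X x = pmass μ Y y :=
  congrArg μ.real (Set.ext h)

theorem pmass_eq_zero_of_forall_ne {X : Ω → α} {x : α} (h : ∀ ω, X ω ≠ x) : pmass μ X x = 0 := by
  have hempty : X ⁻¹' {x} = ∅ := Set.eq_empty_of_forall_notMem h
  rw [pmass, hempty, measure_empty, ENNReal.toReal_zero]

theorem measurableSet_preimage_of_fibers [Countable τ] {T : Ω → τ}
    (hT : ∀ t, MeasurableSet (T ⁻¹' {t})) (s : Set τ) : MeasurableSet (T ⁻¹' s) :=
  letI : MeasurableSpace τ := ⊤
  measurable_to_countable' hT (MeasurableSpace.measurableSet_top (s := s))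

theorem expVal_const_mul_sum {ι : Type*} [Fintype ι] [Fintype α] (X : Ω → α) (c : ℝ)
    (f : ι → α → ℝ) : expVal μ X (fun a => c * ∑ i, f i a) = c * ∑ i, expVal μ X (f i) := by
  simp_rw [expVal, Finset.mul_sum]
  rw [Finset.sum_comm]
  exact Finset.sum_congr rfl fun i _ => Finset.sum_congr rfl fun a _ => by ring

variable [IsFiniteMeasure μ]

theorem pmass_le_pmass_of_imp {X : Ω → α} {Y : Ω → β} {x : α} {y : β}
    (h : ∀ ω, X ω = x → Y ω = y) : pmass μ X x ≤ pmass μ Y y :=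
  measureReal_mono h

theorem sum_pmass_prodMk [Fintype τ] {T : Ω → τ} (hT : ∀ t, MeasurableSet (T ⁻¹' {t}))
    (X : Ω → α) (x : α) : ∑ t, pmass μ (fun ω => (T ω, X ω)) (t, x) = pmass μ X x := by
  have hinter (t : τ) : pmass μ (fun ω => (T ω, X ω)) (t, x) =
      (μ.restrict (X ⁻¹' {x})).real (T ⁻¹' {t}) := by
    rw [measureReal_restrict_apply (hT t)]
    exact congrArg μ.real (Set.ext fun ω => Prod.mk_inj)
  simp_rw [hinter]
  rw [sum_measureReal_preimage_singleton _ fun t _ => hT t, Finset.coe_univ, Set.preimage_univ,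
    measureReal_restrict_apply_univ]
  rfl

theorem pmass_comp [Fintype τ] [DecidableEq α] {T : Ω → τ} (hT : ∀ t, MeasurableSet (T ⁻¹' {t}))
    (g : τ → α) (a : α) : pmass μ (fun ω => g (T ω)) a = ∑ t with g t = a, pmass μ T t := by
  rw [← sum_pmass_prodMk hT, Finset.sum_filter]
  refine Finset.sum_congr rfl fun t _ => ?_
  split_ifs with hg
  · exact pmass_congr fun ω => by grind
  · exact pmass_eq_zero_of_forall_ne fun ω => by grind

theorem expVal_comp [Fintype τ] [Fintype α] {T : Ω → τ} (hT : ∀ t, MeasurableSet (T ⁻¹' {t}))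
    (g : τ → α) (f : α → ℝ) :
    expVal μ (fun ω => g (T ω)) f = expVal μ T (fun t => f (g t)) := by
  classical
  simp_rw [expVal, pmass_comp hT, Finset.sum_mul]
  rw [← Finset.sum_fiberwise Finset.univ g]
  refine Finset.sum_congr rfl fun a _ => Finset.sum_congr rfl fun t ht => ?_
  rw [(Finset.mem_filter.mp ht).2]

end FiniteRandomVariables

section ConditionalIndependence

variable {Ω : Type*} [MeasurableSpace Ω] {μ : Measure Ω} {α β γ ρ : Type*}

theorem CondIndepRV.pmass_mul_sum_eq [Fintype α] [Fintype γ]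
    {A : Ω → α} {B : Ω → β} {C : Ω → γ}
    (hABC : CondIndepRV μ A B C) (cost : α → γ → ℝ) (b : β) :
    pmass μ B b * ∑ c, ∑ a, pmass μ (fun ω => (A ω, B ω, C ω)) (a, b, c) * cost a c =
      ∑ c, pmass μ (fun ω => (B ω, C ω)) (b, c) *
        ∑ a, pmass μ (fun ω => (A ω, B ω)) (a, b) * cost a c := by
  simp_rw [Finset.mul_sum]
  refine Finset.sum_congr rfl fun c _ => Finset.sum_congr rfl fun a _ => ?_
  linear_combination cost a c * hABC a b c

variable [IsFiniteMeasure μ]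

theorem condIndepRV_of_pmass_eq_mul [Finite α] [Finite γ]
    {A : Ω → α} {B : Ω → β} {C : Ω → γ}
    (hA : ∀ a, MeasurableSet (A ⁻¹' {a})) (hC : ∀ c, MeasurableSet (C ⁻¹' {c}))
    (g : α → β → ℝ) (f : β → γ → ℝ)
    (hgf : ∀ a b c, pmass μ (fun ω => (A ω, B ω, C ω)) (a, b, c) = g a b * f b c) :
    CondIndepRV μ A B C := by
  cases nonempty_fintype α
  cases nonempty_fintype γ
  intro a b c
  have hAB (a : α) : pmass μ (fun ω => (A ω, B ω)) (a, b) = g a b * ∑ c, f b c := by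
    rw [← sum_pmass_prodMk hC, Finset.mul_sum]
    refine Finset.sum_congr rfl fun c _ => ?_
    rw [← hgf]
    exact pmass_congr fun ω => by grind
  have hBC : pmass μ (fun ω => (B ω, C ω)) (b, c) = (∑ a, g a b) * f b c := by
    rw [← sum_pmass_prodMk hA, Finset.sum_mul]
    exact Finset.sum_congr rfl fun a _ => hgf a b c
  have hB : pmass μ B b = (∑ a, g a b) * ∑ c, f b c := by
    rw [← sum_pmass_prodMk hA, Finset.sum_mul]
    exact Finset.sum_congr rfl fun a _ => hAB a
  rw [hgf, hB, hAB, hBC]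
  ring

theorem condIndepRV_comp_of_pmass_eq_mul [Finite α] [Finite γ] [Finite ρ] {R : Ω → ρ} {C : Ω → γ}
    (hR : ∀ r, MeasurableSet (R ⁻¹' {r})) (hC : ∀ c, MeasurableSet (C ⁻¹' {c}))
    (A : ρ → α) (B : ρ → β) (h : ρ → ℝ) (f : β → γ → ℝ)
    (hlaw : ∀ r c, pmass μ (fun ω => (R ω, C ω)) (r, c) = h r * f (B r) c) :
    CondIndepRV μ (fun ω => A (R ω)) (fun ω => B (R ω)) C := by
  classical
  cases nonempty_fintype ρ
  have hA (a : α) : MeasurableSet ((fun ω => A (R ω)) ⁻¹' {a}) :=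
    measurableSet_preimage_of_fibers hR (A ⁻¹' {a})
  refine condIndepRV_of_pmass_eq_mul hA hC (fun a b => ∑ r with A r = a ∧ B r = b, h r) f
    fun a b c => ?_
  rw [← sum_pmass_prodMk hR, Finset.sum_filter, Finset.sum_mul]
  refine Finset.sum_congr rfl fun r _ => ?_
  split_ifs with hr
  · rw [← hr.2, ← hlaw]
    exact pmass_congr fun ω => by grind
  · rw [zero_mul]
    exact pmass_eq_zero_of_forall_ne fun ω => by grind

namespace CondIndepRV

variable [Fintype α] [Fintype γ] {A : Ω → α} {B : Ω → β} {C : Ω → γ}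

theorem exists_sum_pmass_mul_le [Nonempty γ] (hABC : CondIndepRV μ A B C)
    (hC : ∀ c, MeasurableSet (C ⁻¹' {c})) (cost : α → γ → ℝ) (b : β) :
    ∃ c₀, ∑ a, pmass μ (fun ω => (A ω, B ω)) (a, b) * cost a c₀ ≤
      ∑ c, ∑ a, pmass μ (fun ω => (A ω, B ω, C ω)) (a, b, c) * cost a c := by
  obtain ⟨c₀, hmin⟩ := Finite.exists_min fun c =>
    ∑ a, pmass μ (fun ω => (A ω, B ω)) (a, b) * cost a c
  refine ⟨c₀, ?_⟩
  rcases (pmass_nonneg (μ := μ) B b).eq_or_lt with hb | hb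
  · have hAB_zero (a : α) : pmass μ (fun ω => (A ω, B ω)) (a, b) = 0 :=
      le_antisymm (hb ▸ pmass_le_pmass_of_imp fun ω => by grind) (pmass_nonneg _ _)
    have hABC_zero (a : α) (c : γ) : pmass μ (fun ω => (A ω, B ω, C ω)) (a, b, c) = 0 :=
      le_antisymm (hb ▸ pmass_le_pmass_of_imp fun ω => by grind) (pmass_nonneg _ _)
    simp [hAB_zero, hABC_zero]
  · refine le_of_mul_le_mul_left ?_ hb
    rw [hABC.pmass_mul_sum_eq]
    calc pmass μ B b * ∑ a, pmass μ (fun ω => (A ω, B ω)) (a, b) * cost a c₀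
        = ∑ c, pmass μ (fun ω => (B ω, C ω)) (b, c) *
            ∑ a, pmass μ (fun ω => (A ω, B ω)) (a, b) * cost a c₀ := by
          rw [← sum_pmass_prodMk hC, Finset.sum_mul]
          exact Finset.sum_congr rfl fun c _ =>
            congrArg (· * _) (pmass_congr fun ω => by grind)
      _ ≤ _ := Finset.sum_le_sum fun c _ =>
          mul_le_mul_of_nonneg_left (hmin c) (pmass_nonneg _ _)

theorem exists_expVal_selector_le [Fintype β] [Nonempty γ] (hABC : CondIndepRV μ A B C)
    (hC : ∀ c, MeasurableSet (C ⁻¹' {c})) (cost : α → β → γ → ℝ) :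
    ∃ σ : β → γ, expVal μ (fun ω => (A ω, B ω)) (fun t => cost t.1 t.2 (σ t.2)) ≤
      expVal μ (fun ω => (A ω, B ω, C ω)) (fun t => cost t.1 t.2.1 t.2.2) := by
  choose σ hσ using fun b => hABC.exists_sum_pmass_mul_le hC (fun a c => cost a b c) b
  refine ⟨σ, ?_⟩
  calc expVal μ (fun ω => (A ω, B ω)) (fun t => cost t.1 t.2 (σ t.2))
      = ∑ b, ∑ a, pmass μ (fun ω => (A ω, B ω)) (a, b) * cost a b (σ b) :=
        Fintype.sum_prod_type_right _
    _ ≤ ∑ b, ∑ c, ∑ a, pmass μ (fun ω => (A ω, B ω, C ω)) (a, b, c) * cost a b c :=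
        Finset.sum_le_sum fun b _ => hσ b
    _ = expVal μ (fun ω => (A ω, B ω, C ω)) (fun t => cost t.1 t.2.1 t.2.2) := by
        rw [expVal, Fintype.sum_prod_type_right, Fintype.sum_prod_type]

end CondIndepRV

end ConditionalIndependence

section MemorylessChannel

variable {Ω : Type*} [MeasurableSpace Ω] {μ : Measure Ω} {ι 𝒳 𝒳t 𝒴 𝒵 𝒦 : Type*}

/-- All of the block `s` except the outputs `Yⱼ` at the positions satisfying `P`. -/
def eraseOutputs (P : ι → Prop) (s : ι → 𝒳t × 𝒳 × 𝒴 × 𝒵) :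
    (ι → 𝒳t × 𝒳 × 𝒵) × ({j // ¬P j} → 𝒴) :=
  (fun j => ((s j).1, (s j).2.1, (s j).2.2.2), fun j => (s j).2.2.1)

/-- The block whose outputs `Yⱼ` are `c` at the positions satisfying `P` and whose other entries are
those of `r`; this inverts `eraseOutputs`. -/
def insertOutputs (P : ι → Prop) [DecidablePred P]
    (r : (ι → 𝒳t × 𝒳 × 𝒵) × ({j // ¬P j} → 𝒴)) (c : {j // P j} → 𝒴) : ι → 𝒳t × 𝒳 × 𝒴 × 𝒵 :=
  fun j => ((r.1 j).1, (r.1 j).2.1, if hj : P j then c ⟨j, hj⟩ else r.2 ⟨j, hj⟩, (r.1 j).2.2)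

theorem eq_insertOutputs_iff (P : ι → Prop) [DecidablePred P] (s : ι → 𝒳t × 𝒳 × 𝒴 × 𝒵)
    (r : (ι → 𝒳t × 𝒳 × 𝒵) × ({j // ¬P j} → 𝒴)) (c : {j // P j} → 𝒴) :
    s = insertOutputs P r c ↔ eraseOutputs P s = r ∧ (fun j : {j // P j} => (s j).2.2.1) = c := by
  constructor
  · rintro rfl
    refine ⟨Prod.ext rfl (funext fun j => ?_), funext fun j => ?_⟩
    · exact dif_neg j.2
    · exact dif_pos j.2
  · rintro ⟨rfl, rfl⟩
    funext j
    simp [insertOutputs, eraseOutputs]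

variable [Fintype ι]

/-- `Sⱼ = (X̃ⱼ, Xⱼ, Yⱼ, Zⱼ)` is a block whose outputs `(Yⱼ, Zⱼ)` come from the inputs `Xⱼ` through
a memoryless channel: the law of `(S, K)` is a weight of `(X̃, X, K)`, in which these may be
arbitrarily dependent, times a product of per-letter weights. The per-letter weights are left
unnormalized, as normalizing constants can be absorbed into the first weight. -/
def HasMemorylessChannel (μ : Measure Ω) (S : Ω → ι → 𝒳t × 𝒳 × 𝒴 × 𝒵) (K : Ω → 𝒦) : Prop :=
  ∃ (source : (ι → 𝒳t × 𝒳) → 𝒦 → ℝ) (channel : ι → 𝒳 → 𝒴 × 𝒵 → ℝ), ∀ s k,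
    pmass μ (fun ω => (S ω, K ω)) (s, k) =
      source (fun j => ((s j).1, (s j).2.1)) k * ∏ j, channel j (s j).2.1 (s j).2.2

theorem hasMemorylessChannel_of_hasIIDLaw {n : ℕ} {S : Ω → Fin n → 𝒳t × 𝒳 × 𝒴 × 𝒵} {K : Ω → 𝒦}
    {pXtX : 𝒳t × 𝒳 → ℝ} {pYZ : 𝒳 → 𝒴 × 𝒵 → ℝ}
    (hS : HasIIDLaw μ S fun s => pXtX (s.1, s.2.1) * pYZ s.2.1 s.2.2) (hKS : IndepRV μ K S) :
    HasMemorylessChannel μ S K := by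
  refine ⟨fun v k => pmass μ K k * ∏ j, pXtX (v j), fun _ => pYZ, fun s k => ?_⟩
  calc pmass μ (fun ω => (S ω, K ω)) (s, k)
      = pmass μ (fun ω => (K ω, S ω)) (k, s) := pmass_congr fun ω => by grind
    _ = _ := by rw [hKS, hS, Finset.prod_mul_distrib, mul_assoc]

theorem HasMemorylessChannel.exists_pmass_eraseOutputs_eq_mul {S : Ω → ι → 𝒳t × 𝒳 × 𝒴 × 𝒵}
    {K : Ω → 𝒦} (hSK : HasMemorylessChannel μ S K) (P : ι → Prop) :
    ∃ (h : ((ι → 𝒳t × 𝒳 × 𝒵) × ({j // ¬P j} → 𝒴)) × 𝒦 → ℝ)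
      (f : ({j // P j} → 𝒳) → ({j // P j} → 𝒵) → ({j // P j} → 𝒴) → ℝ), ∀ r c,
      pmass μ (fun ω => ((eraseOutputs P (S ω), K ω), fun j : {j // P j} => (S ω j).2.2.1)) (r, c) =
        h r * f (fun j => (r.1.1 j).2.1) (fun j => (r.1.1 j).2.2) c := by
  classical
  obtain ⟨source, channel, hlaw⟩ := hSK
  refine ⟨fun r => source (fun j => ((r.1.1 j).1, (r.1.1 j).2.1)) r.2 *
      ∏ j : {j // ¬P j}, channel j (r.1.1 j).2.1 (r.1.2 j, (r.1.1 j).2.2),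
    fun x z c => ∏ j : {j // P j}, channel j (x j) (c j, z j), ?_⟩
  rintro ⟨⟨v, y⟩, k⟩ c
  have hevent (ω : Ω) : ((eraseOutputs P (S ω), K ω), fun j : {j // P j} => (S ω j).2.2.1) =
      (((v, y), k), c) ↔ (S ω, K ω) = (insertOutputs P (v, y) c, k) := by
    simp only [Prod.mk.injEq, eq_insertOutputs_iff]
    tauto
  have hP (j : {j // P j}) : (insertOutputs P (v, y) c j).2.2 = (c j, (v j).2.2) := by
    simp [insertOutputs, j.2]
  have hnP (j : {j // ¬P j}) : (insertOutputs P (v, y) c j).2.2 = (y j, (v j).2.2) := by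
    simp [insertOutputs, j.2]
  rw [pmass_congr hevent, hlaw, ← Fintype.prod_subtype_mul_prod_subtype P]
  simp_rw [hP, hnP]
  simp only [insertOutputs]
  ring

end MemorylessChannel

section SingleLetterization

variable {Ω : Type*} [MeasurableSpace Ω] {μ : Measure Ω} {𝒳 𝒳t 𝒴 𝒵 𝒲 𝒦 : Type*} {n : ℕ}

/-- The past outputs `Y^{i-1}` of a block. -/
def pastOutputs (i : Fin n) (s : Fin n → 𝒳t × 𝒳 × 𝒴 × 𝒵) : {j : Fin n // j.1 < i} → 𝒴 :=
  fun j => (s j).2.2.1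

/-- The tuple `(W, K, X^{i-1}, Z^{i-1}, Yᵢⁿ)`, as a function of the realization of `(S, K)`. -/
def letterObservation (enc : (Fin n → 𝒳t) → 𝒦 → 𝒲) (i : Fin n)
    (t : (Fin n → 𝒳t × 𝒳 × 𝒴 × 𝒵) × 𝒦) :
    𝒲 × 𝒦 × ({j : Fin n // j.1 < i} → 𝒳) × ({j : Fin n // j.1 < i} → 𝒵) ×
      ({j : Fin n // i ≤ j} → 𝒴) :=
  (enc (fun j => (t.1 j).1) t.2, t.2, fun j => (t.1 j).2.1, fun j => (t.1 j).2.2.2,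
    fun j => (t.1 j).2.2.1)

/-- The auxiliary variable `Uᵢ = (W, Yᵢ₊₁ⁿ, Z^{i-1}, X^{i-1}, K)`, as a function of the realization
of `(S, K)`. -/
def auxiliaryVariable (enc : (Fin n → 𝒳t) → 𝒦 → 𝒲) (i : Fin n)
    (t : (Fin n → 𝒳t × 𝒳 × 𝒴 × 𝒵) × 𝒦) :
    𝒲 × ({j : Fin n // i < j} → 𝒴) × ({j : Fin n // j.1 < i} → 𝒵) ×
      ({j : Fin n // j.1 < i} → 𝒳) × 𝒦 :=
  (enc (fun j => (t.1 j).1) t.2, fun j => (t.1 j).2.2.1, fun j => (t.1 j).2.2.2,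
    fun j => (t.1 j).2.1, t.2)

/-- The regrouping of `(Uᵢ, Yᵢ)` into `(W, K, X^{i-1}, Z^{i-1}, Yᵢⁿ)`. -/
def regroupAuxiliary (i : Fin n)
    (uy : (𝒲 × ({j : Fin n // i < j} → 𝒴) × ({j : Fin n // j.1 < i} → 𝒵) ×
      ({j : Fin n // j.1 < i} → 𝒳) × 𝒦) × 𝒴) :
    𝒲 × 𝒦 × ({j : Fin n // j.1 < i} → 𝒳) × ({j : Fin n // j.1 < i} → 𝒵) ×
      ({j : Fin n // i ≤ j} → 𝒴) :=
  (uy.1.1, uy.1.2.2.2.2, uy.1.2.2.2.1, uy.1.2.2.1,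
    fun j => if hj : i < j then uy.1.2.1 ⟨j, hj⟩ else uy.2)

/-- The output sequence `Yⁿ` with past `Y^{i-1} = c` and remainder `Yᵢⁿ = y`. -/
def joinOutputs (i : Fin n) (c : {j : Fin n // j.1 < i} → 𝒴) (y : {j : Fin n // i ≤ j} → 𝒴) :
    Fin n → 𝒴 :=
  fun j => if hj : j.1 < i then c ⟨j, hj⟩ else y ⟨j, not_lt.mp hj⟩

theorem regroupAuxiliary_auxiliaryVariable (enc : (Fin n → 𝒳t) → 𝒦 → 𝒲) (i : Fin n)
    (t : (Fin n → 𝒳t × 𝒳 × 𝒴 × 𝒵) × 𝒦) :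
    regroupAuxiliary i (auxiliaryVariable enc i t, (t.1 i).2.2.1) = letterObservation enc i t := by
  have hY : (fun j : {j : Fin n // i ≤ j} => if i < j.1 then (t.1 j).2.2.1 else (t.1 i).2.2.1) =
      fun j : {j : Fin n // i ≤ j} => (t.1 j).2.2.1 := by
    funext ⟨j, hj⟩
    rcases hj.eq_or_lt with rfl | hlt
    · simp
    · simp [hlt]
  simp [regroupAuxiliary, auxiliaryVariable, letterObservation, hY]

theorem joinOutputs_pastOutputs (i : Fin n) (s : Fin n → 𝒳t × 𝒳 × 𝒴 × 𝒵) :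
    joinOutputs i (pastOutputs i s) (fun j => (s j).2.2.1) = fun j => (s j).2.2.1 := by
  funext j
  simp [joinOutputs, pastOutputs]

variable {𝒳h : Type*} {S : Ω → Fin n → 𝒳t × 𝒳 × 𝒴 × 𝒵} {K : Ω → 𝒦}

theorem condIndepRV_letterObservation_pastOutputs [IsFiniteMeasure μ]
    [Finite 𝒳] [Finite 𝒳t] [Finite 𝒴] [Finite 𝒵] [Finite 𝒦]
    (hmeas : ∀ t, MeasurableSet ((fun ω => (S ω, K ω)) ⁻¹' {t}))
    (hSK : HasMemorylessChannel μ S K) (enc : (Fin n → 𝒳t) → 𝒦 → 𝒲) (i : Fin n) :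
    CondIndepRV μ (fun ω => (S ω i).1) (fun ω => letterObservation enc i (S ω, K ω))
      (fun ω => pastOutputs i (S ω)) := by
  obtain ⟨h, f, hlaw⟩ := hSK.exists_pmass_eraseOutputs_eq_mul fun j : Fin n => j.1 < i
  exact condIndepRV_comp_of_pmass_eq_mul
    (R := fun ω => (eraseOutputs (fun j : Fin n => j.1 < i) (S ω), K ω))
    (fun r => measurableSet_preimage_of_fibers hmeas
      ((fun t => (eraseOutputs (fun j : Fin n => j.1 < i) t.1, t.2)) ⁻¹' {r}))
    (fun c => measurableSet_preimage_of_fibers hmeas ((fun t => pastOutputs i t.1) ⁻¹' {c}))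
    (fun r => (r.1.1 i).1)
    (fun r => (enc (fun j => (r.1.1 j).1) r.2, r.2, fun j : {j : Fin n // j.1 < i} => (r.1.1 j).2.1,
      fun j : {j : Fin n // j.1 < i} => (r.1.1 j).2.2,
      fun j : {j : Fin n // i ≤ j} => r.1.2 ⟨j, not_lt.mpr j.2⟩))
    h (fun b => f b.2.2.1 b.2.2.2.1) hlaw

variable [IsProbabilityMeasure μ]
  [Fintype 𝒳] [Fintype 𝒳t] [Fintype 𝒴] [Fintype 𝒵] [Fintype 𝒲] [Fintype 𝒦]

theorem exists_letter_decoder_expVal_le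
    (hmeas : ∀ t, MeasurableSet ((fun ω => (S ω, K ω)) ⁻¹' {t}))
    (hSK : HasMemorylessChannel μ S K) (enc : (Fin n → 𝒳t) → 𝒦 → 𝒲)
    (Dec : (Fin n → 𝒴) → 𝒲 → 𝒦 → Fin n → 𝒳h) (d : 𝒳t → 𝒳h → ℝ) (i : Fin n) :
    ∃ φ : (𝒲 × ({j : Fin n // i < j} → 𝒴) × ({j : Fin n // j.1 < i} → 𝒵) ×
        ({j : Fin n // j.1 < i} → 𝒳) × 𝒦) × 𝒴 → 𝒳h,
      expVal μ (fun ω => ((S ω i).1, auxiliaryVariable enc i (S ω, K ω), (S ω i).2.2.1))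
          (fun t => d t.1 (φ (t.2.1, t.2.2))) ≤
        expVal μ (fun ω => ((S ω i).1, (fun j => (S ω j).2.2.1),
            enc (fun j => (S ω j).1) (K ω), K ω))
          (fun t => d t.1 (Dec t.2.1 t.2.2.1 t.2.2.2 i)) := by
  obtain ⟨ω₀⟩ := nonempty_of_isProbabilityMeasure μ
  have : Nonempty ({j : Fin n // j.1 < i} → 𝒴) := ⟨pastOutputs i (S ω₀)⟩
  let decode (b : 𝒲 × 𝒦 × ({j : Fin n // j.1 < i} → 𝒳) × ({j : Fin n // j.1 < i} → 𝒵) ×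
      ({j : Fin n // i ≤ j} → 𝒴)) (c : {j : Fin n // j.1 < i} → 𝒴) : 𝒳h :=
    Dec (joinOutputs i c b.2.2.2.2) b.1 b.2.1 i
  obtain ⟨σ, hσ⟩ :=
    (condIndepRV_letterObservation_pastOutputs hmeas hSK enc i).exists_expVal_selector_le
      (fun c => measurableSet_preimage_of_fibers hmeas ((fun t => pastOutputs i t.1) ⁻¹' {c}))
      fun a b c => d a (decode b c)
  refine ⟨fun uy => decode (regroupAuxiliary i uy) (σ (regroupAuxiliary i uy)), ?_⟩
  rw [expVal_comp hmeas fun t => ((t.1 i).1, letterObservation enc i t),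
    expVal_comp hmeas fun t => ((t.1 i).1, letterObservation enc i t, pastOutputs i t.1)] at hσ
  rw [expVal_comp hmeas fun t => ((t.1 i).1, auxiliaryVariable enc i t, (t.1 i).2.2.1),
    expVal_comp hmeas fun t => ((t.1 i).1, (fun j => (t.1 j).2.2.1),
      enc (fun j => (t.1 j).1) t.2, t.2)]
  simpa only [regroupAuxiliary_auxiliaryVariable, decode, letterObservation,
    joinOutputs_pastOutputs] using hσ

theorem distortion_single_letterization_general
    (hmeas : ∀ t, MeasurableSet ((fun ω => (S ω, K ω)) ⁻¹' {t}))
    (hSK : HasMemorylessChannel μ S K) (enc : (Fin n → 𝒳t) → 𝒦 → 𝒲)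
    (Dec : (Fin n → 𝒴) → 𝒲 → 𝒦 → Fin n → 𝒳h) (d : 𝒳t → 𝒳h → ℝ) :
    (∀ i : Fin n, CondIndepRV μ (fun ω => (S ω i).1)
      (fun ω => letterObservation enc i (S ω, K ω)) (fun ω => pastOutputs i (S ω))) ∧
    ∃ φ : (i : Fin n) →
        (𝒲 × ({j : Fin n // i < j} → 𝒴) × ({j : Fin n // j.1 < i} → 𝒵) ×
          ({j : Fin n // j.1 < i} → 𝒳) × 𝒦) × 𝒴 → 𝒳h,
      (∀ i : Fin n,
        expVal μ (fun ω => ((S ω i).1, auxiliaryVariable enc i (S ω, K ω), (S ω i).2.2.1))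
            (fun t => d t.1 (φ i (t.2.1, t.2.2))) ≤
          expVal μ (fun ω => ((S ω i).1, (fun j => (S ω j).2.2.1),
              enc (fun j => (S ω j).1) (K ω), K ω))
            (fun t => d t.1 (Dec t.2.1 t.2.2.1 t.2.2.2 i))) ∧
      expVal μ (fun ω => (S ω, K ω))
          (fun t => (1 / (n : ℝ)) * ∑ i, d (t.1 i).1
            (Dec (fun j => (t.1 j).2.2.1) (enc (fun j => (t.1 j).1) t.2) t.2 i)) ≥
        (1 / (n : ℝ)) * ∑ i : Fin n,
          expVal μ (fun ω => ((S ω i).1, auxiliaryVariable enc i (S ω, K ω), (S ω i).2.2.1))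
            (fun t => d t.1 (φ i (t.2.1, t.2.2))) := by
  choose φ hφ using exists_letter_decoder_expVal_le hmeas hSK enc Dec d
  refine ⟨condIndepRV_letterObservation_pastOutputs hmeas hSK enc, φ, hφ, ?_⟩
  rw [expVal_const_mul_sum]
  refine mul_le_mul_of_nonneg_left (Finset.sum_le_sum fun i _ => ?_) (by positivity)
  exact (hφ i).trans_eq (expVal_comp hmeas (fun t => ((t.1 i).1, (fun j => (t.1 j).2.2.1),
    enc (fun j => (t.1 j).1) t.2, t.2)) _)

end SingleLetterization

/-- **Single-letterization of the distortion constraint**: under the converse setup,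
for any decoder `Dec` and bounded per-letter distortion `d`: (a) `X̃ᵢ` is conditionally
independent of `Y^{i−1}` given `(W, K, X^{i−1}, Z^{i−1}, Yᵢⁿ)`; and (b) there are
reconstruction functions `φᵢ` of `(Uᵢ, Yᵢ)` with
`E[d(X̃ᵢ, φᵢ(Uᵢ, Yᵢ))] ≤ E[d(X̃ᵢ, Dec(Yⁿ, W, K)ᵢ)]`, whence
`E[(1/n) ∑ᵢ d(X̃ᵢ, Dec(Yⁿ, W, K)ᵢ)] ≥ (1/n) ∑ᵢ E[d(X̃ᵢ, φᵢ(Uᵢ, Yᵢ))]`. -/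
theorem distortion_single_letterization
    {𝒳 𝒳t 𝒴 𝒵 𝒲 𝒦 : Type}
    [Fintype 𝒳] [Fintype 𝒳t] [Fintype 𝒴] [Fintype 𝒵] [Fintype 𝒲] [Fintype 𝒦]
    [MeasurableSpace 𝒳] [DiscreteMeasurableSpace 𝒳]
    [MeasurableSpace 𝒳t] [DiscreteMeasurableSpace 𝒳t]
    [MeasurableSpace 𝒴] [DiscreteMeasurableSpace 𝒴]
    [MeasurableSpace 𝒵] [DiscreteMeasurableSpace 𝒵]
    [MeasurableSpace 𝒲] [DiscreteMeasurableSpace 𝒲]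
    [MeasurableSpace 𝒦] [DiscreteMeasurableSpace 𝒦]
    {Ω : Type} [MeasurableSpace Ω] (μ : MeasureTheory.Measure Ω)
    [MeasureTheory.IsProbabilityMeasure μ]
    {n : ℕ} (S : Ω → Fin n → 𝒳t × 𝒳 × 𝒴 × 𝒵) (K : Ω → 𝒦)
    (hSmeas : Measurable S) (hKmeas : Measurable K)
    (pX : 𝒳 → ℝ) (pXt : 𝒳 → 𝒳t → ℝ) (pYZ : 𝒳 → 𝒴 × 𝒵 → ℝ)
    (hpX0 : ∀ x, 0 ≤ pX x) (hpX1 : ∑ x, pX x = 1)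
    (hpXt0 : ∀ x a, 0 ≤ pXt x a) (hpXt1 : ∀ x, ∑ a, pXt x a = 1)
    (hpYZ0 : ∀ x yz, 0 ≤ pYZ x yz) (hpYZ1 : ∀ x, ∑ yz, pYZ x yz = 1)
    (hiid : HasIIDLaw μ S (fun s => pX s.2.1 * pXt s.2.1 s.1 * pYZ s.2.1 s.2.2))
    (hKunif : UniformRV μ K) (hKind : IndepRV μ K S)
    (enc : (Fin n → 𝒳t) → 𝒦 → 𝒲)
    {𝒳h : Type} [Fintype 𝒳h]
    (Dec : (Fin n → 𝒴) → 𝒲 → 𝒦 → Fin n → 𝒳h)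
    (dmax : ℝ) (d : 𝒳t → 𝒳h → ℝ) (hd0 : ∀ a b, 0 ≤ d a b) (hd1 : ∀ a b, d a b ≤ dmax)
    :
    (∀ i : Fin n,
      CondIndepRV μ
        (fun ω => (S ω i).1)
        (fun ω => (enc (fun j => (S ω j).1) (K ω), K ω, (fun j : {j : Fin n // j.1 < i} => (S ω j.1).2.1), (fun j : {j : Fin n // j.1 < i} => (S ω j.1).2.2.2), (fun j : {j : Fin n // i ≤ j} => (S ω j.1).2.2.1)))
        (fun ω => (fun j : {j : Fin n // j.1 < i} => (S ω j.1).2.2.1))) ∧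
    ∃ φ : (i : Fin n) →
        (𝒲 × ({j : Fin n // i < j} → 𝒴) × ({j : Fin n // j.1 < i} → 𝒵) ×
          ({j : Fin n // j.1 < i} → 𝒳) × 𝒦) × 𝒴 → 𝒳h,
      (∀ i : Fin n,
        expVal μ
          (fun ω => ((S ω i).1, (fun ω => (enc (fun j => (S ω j).1) (K ω),
          (fun j : {j : Fin n // i < j} => (S ω j.1).2.2.1),
          (fun j : {j : Fin n // j.1 < i} => (S ω j.1).2.2.2),
          (fun j : {j : Fin n // j.1 < i} => (S ω j.1).2.1),
          K ω)) ω, (S ω i).2.2.1))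
          (fun t => d t.1 (φ i (t.2.1, t.2.2)))
        ≤ expVal μ
            (fun ω => ((S ω i).1, (fun j => (S ω j).2.2.1), enc (fun j => (S ω j).1) (K ω), K ω))
            (fun t => d t.1 (Dec t.2.1 t.2.2.1 t.2.2.2 i))) ∧
      expVal μ (fun ω => (S ω, K ω))
        (fun sk => (1 / (n : ℝ)) * ∑ i, d ((sk.1 i).1)
          (Dec (fun j => (sk.1 j).2.2.1) (enc (fun j => (sk.1 j).1) sk.2) sk.2 i))
      ≥ (1 / (n : ℝ)) * ∑ i : Fin n,
          expVal μ
            (fun ω => ((S ω i).1, (fun ω => (enc (fun j => (S ω j).1) (K ω),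
          (fun j : {j : Fin n // i < j} => (S ω j.1).2.2.1),
          (fun j : {j : Fin n // j.1 < i} => (S ω j.1).2.2.2),
          (fun j : {j : Fin n // j.1 < i} => (S ω j.1).2.1),
          K ω)) ω, (S ω i).2.2.1))
            (fun t => d t.1 (φ i (t.2.1, t.2.2))) :=
  distortion_single_letterization_general
    (fun t => hSmeas.prodMk hKmeas (measurableSet_singleton t))
    (hasMemorylessChannel_of_hasIIDLaw (pXtX := fun v => pX v.2 * pXt v.2 v.1) hiid hKind) enc Dec d
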